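/- arXiv:2209.04379 — 5 statements merged into one kernel-verified Lean document; each statement's English description precedes it below -/
import Mathlib

section
/- (Proposition 1, concrete form.) Let n ≥ 1, let s : Fin n → ℕ be a monotone (nondecreasing) sequence of file sizes with s i ≥ 1, let p : Fin n → ℝ with p i ≥ 0, let c : ℝ with c ≥ 1, and let f : Fin n → ℕ be a padding scheme satisfying s i ≤ f i and (f i : ℝ) ≤ c * s i for all i. Define f* : Fin n → ℕ by f* i = the largest value s j (over j : Fin n) with s j ≤ f i (this set is nonempty since s i ≤ f i). Then: (1) for every i, s i ≤ f* i, f* i ≤ f i, and (f* i : ℝ) ≤ c * s i, so f* is a feasible padding scheme; (2) every value of f* lies in the range of s; and (3) the vulnerability of f* is at most that of f, i.e., ∑_{y ∈ image of f*} (max of p i over {i | f* i = y}) ≤ ∑_{y ∈ image of f} (max of p i over {i | f i = y}). -/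
/-- The vulnerability of a deterministic scheme `f` with weights `p`:
the sum, over the values `y` in the image of `f`, of the maximum of `p i` over
the preimage `{i | f i = y}`. -/
noncomputable def vuln {α β : Type*} [Fintype α] [DecidableEq β]
    (p : α → ℝ) (f : α → β) : ℝ :=
  ∑ y ∈ (Finset.univ.image f).attach,
    (Finset.univ.filter (fun i => f i = y.1)).sup'
      (by
        obtain ⟨i, -, hi⟩ := Finset.mem_image.mp y.2
        exact ⟨i, Finset.mem_filter.mpr ⟨Finset.mem_univ i, hi⟩⟩) p

/-!
With nonnegative weights, the vulnerability of `f` is the largest weight of a set of indices on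
which `f` is injective: the maximum is attained by picking a heaviest index in each fiber. If `g`
factors through `f`, then `g` separates no more indices than `f` does, so its vulnerability is at
most that of `f`. The scheme `f*` factors through `f`, as `f* i` depends only on `f i`.
-/

section Vulnerability

variable {α β γ : Type*} [Fintype α] [DecidableEq β] [DecidableEq γ]

theorem exists_injOn_sum_eq_vuln (p : α → ℝ) (f : α → β) :
    ∃ T : Finset α, Set.InjOn f T ∧ ∑ i ∈ T, p i = vuln p f := by
  have exists_heaviest (y : {y // y ∈ Finset.univ.image f}) :
      ∃ i ∈ Finset.univ.filter (fun i => f i = y.1),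
        (Finset.univ.filter (fun i => f i = y.1)).sup'
          (Finset.fiber_nonempty_iff_mem_image.mpr y.2) p = p i :=
    Finset.exists_mem_eq_sup' _ p
  choose heaviest mem_fiber sup'_eq using exists_heaviest
  have f_heaviest (y) : f (heaviest y) = y.1 := (Finset.mem_filter.mp (mem_fiber y)).2
  have eq_of_f_heaviest_eq {y z} (h : f (heaviest y) = f (heaviest z)) : y = z :=
    Subtype.ext ((f_heaviest y).symm.trans (h.trans (f_heaviest z)))
  have heaviest_injective : Function.Injective heaviest :=
    fun _ _ h => eq_of_f_heaviest_eq (congrArg f h)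
  refine ⟨(Finset.univ.image f).attach.map ⟨heaviest, heaviest_injective⟩, ?_, ?_⟩
  · intro i hi j hj hij
    obtain ⟨y, -, rfl⟩ := Finset.mem_map.mp hi
    obtain ⟨z, -, rfl⟩ := Finset.mem_map.mp hj
    exact congrArg heaviest (eq_of_f_heaviest_eq hij)
  · rw [Finset.sum_map]
    exact Finset.sum_congr rfl fun y _ => (sup'_eq y).symm

theorem sum_le_vuln_of_injOn {p : α → ℝ} (hp : ∀ i, 0 ≤ p i) {f : α → β} {T : Finset α}
    (hT : Set.InjOn f T) : ∑ i ∈ T, p i ≤ vuln p f := by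
  let fiberMax (y : {y // y ∈ Finset.univ.image f}) : ℝ :=
    (Finset.univ.filter (fun i => f i = y.1)).sup'
      (Finset.fiber_nonempty_iff_mem_image.mpr y.2) p
  let toImage (i : α) : {y // y ∈ Finset.univ.image f} :=
    ⟨f i, Finset.mem_image_of_mem f (Finset.mem_univ i)⟩
  have le_fiberMax (i : α) : p i ≤ fiberMax (toImage i) :=
    Finset.le_sup' p (by simp [toImage])
  have fiberMax_nonneg (y) : 0 ≤ fiberMax y := by
    obtain ⟨i, hi⟩ := Finset.fiber_nonempty_iff_mem_image.mpr y.2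
    exact (hp i).trans (Finset.le_sup' p hi)
  have toImage_injOn : Set.InjOn toImage T :=
    fun i hi j hj h => hT hi hj (congrArg Subtype.val h)
  calc ∑ i ∈ T, p i
      ≤ ∑ i ∈ T, fiberMax (toImage i) := Finset.sum_le_sum fun i _ => le_fiberMax i
    _ = ∑ y ∈ T.image toImage, fiberMax y := (Finset.sum_image toImage_injOn).symm
    _ ≤ ∑ y ∈ (Finset.univ.image f).attach, fiberMax y :=
        Finset.sum_le_sum_of_subset_of_nonneg (fun y _ => Finset.mem_attach _ y)
          fun y _ _ => fiberMax_nonneg y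
    _ = vuln p f := rfl

theorem isGreatest_vuln {p : α → ℝ} (hp : ∀ i, 0 ≤ p i) (f : α → β) :
    IsGreatest ((fun T : Finset α => ∑ i ∈ T, p i) '' {T | Set.InjOn f T}) (vuln p f) :=
  ⟨exists_injOn_sum_eq_vuln p f, by
    rintro _ ⟨T, hT, rfl⟩
    exact sum_le_vuln_of_injOn hp hT⟩

theorem vuln_le_of_factorsThrough {p : α → ℝ} (hp : ∀ i, 0 ≤ p i) {f : α → β} {g : α → γ}
    (hgf : g.FactorsThrough f) : vuln p g ≤ vuln p f :=
  (isGreatest_vuln hp g).mono (isGreatest_vuln hp f) <|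
    Set.image_mono fun _ hT _ hi _ hj hij => hT hi hj (hgf hij)

end Vulnerability

theorem factorsThrough_of_forall_isGreatest {ι β α : Type*} [PartialOrder α] {A : β → Set α}
    {f : ι → β} {g : ι → α} (hg : ∀ i, IsGreatest (A (f i)) (g i)) : g.FactorsThrough f :=
  fun i j hij => (hg i).unique (hij ▸ hg j)

/-- Sizes live in a partial order `α`, a size `x` costs `w x`, and padding file `i` may cost at
most `b i`; multiplicative padding is the case `b i = c * w (s i)`. -/
theorem prop1_concrete_general {ι α R : Type*} [Fintype ι] [PartialOrder α] [DecidableEq α]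
    [Preorder R] {w : α → R} (hw : Monotone w) {s : ι → α} {p : ι → ℝ} (hp : ∀ i, 0 ≤ p i)
    {b : ι → R} {f : ι → α} (hsf : ∀ i, s i ≤ f i) (hfb : ∀ i, w (f i) ≤ b i) {fstar : ι → α}
    (hfstar : ∀ i, IsGreatest (Set.range s ∩ Set.Iic (f i)) (fstar i)) :
    (∀ i, s i ≤ fstar i ∧ fstar i ≤ f i ∧ w (fstar i) ≤ b i) ∧
      (∀ i, fstar i ∈ Set.range s) ∧
      vuln p fstar ≤ vuln p f := by
  have le_fstar (i : ι) : s i ≤ fstar i := (hfstar i).2 ⟨Set.mem_range_self i, hsf i⟩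
  have fstar_le (i : ι) : fstar i ≤ f i := (hfstar i).1.2
  have fstar_factors : fstar.FactorsThrough f :=
    factorsThrough_of_forall_isGreatest (A := fun x => Set.range s ∩ Set.Iic x) hfstar
  exact ⟨fun i => ⟨le_fstar i, fstar_le i, (hw (fstar_le i)).trans (hfb i)⟩,
    fun i => (hfstar i).1.1, vuln_le_of_factorsThrough hp fstar_factors⟩

/-- Proposition 1, concrete form. Given a feasible padding scheme `f` for monotone
sizes `s` with constraint `c`, the scheme `f*` mapping each file to the largest file
size `s j` not exceeding `f i` is feasible, takes values in the range of `s`, and has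
vulnerability at most that of `f`. -/
theorem prop1_concrete (n : ℕ) (hn : 1 ≤ n)
    (s : Fin n → ℕ) (hmono : Monotone s) (hs : ∀ i, 1 ≤ s i)
    (p : Fin n → ℝ) (hp : ∀ i, 0 ≤ p i)
    (c : ℝ) (hc : 1 ≤ c)
    (f : Fin n → ℕ) (hf₁ : ∀ i, s i ≤ f i) (hf₂ : ∀ i, (f i : ℝ) ≤ c * s i)
    (fstar : Fin n → ℕ)
    (hfstar : ∀ i, IsGreatest {v | (∃ j, s j = v) ∧ v ≤ f i} (fstar i)) :
    (∀ i, s i ≤ fstar i ∧ fstar i ≤ f i ∧ (fstar i : ℝ) ≤ c * s i) ∧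
      (∀ i, fstar i ∈ Set.range s) ∧
      vuln p fstar ≤ vuln p f :=
  prop1_concrete_general Nat.mono_cast hp hf₁ hf₂ hfstar
end

section
/- (Observation 1.) Let n, m ≥ 1, let p : Fin n → ℝ with p i ≥ 0, and let l, r : Fin n → Fin m be padding constraints with l i ≤ r i for all i. Let f : Fin n → Fin m be a feasible deterministic scheme (l i ≤ f i ≤ r i for all i), let i₀ be an index at which p attains its maximum over Fin n, and set j = f i₀. Define f* : Fin n → Fin m by f* i = j whenever l i ≤ j ≤ r i, and f* i = f i otherwise. Then f* is feasible and V(f*) ≤ V(f), where V(h) = ∑_{j' : Fin m} (max of p i over {i | h i = j'}, taken as 0 on the empty set). Consequently, if f minimizes V among feasible schemes, then so does f*, i.e., there is a min-vulnerability-optimal scheme in which every file i with l i ≤ j ≤ r i is padded to column j. -/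
/-- The vulnerability of a deterministic scheme `h : Fin n → Fin m` with
frequencies `p`: `∑_j max {p i | h i = j}`, the maximum of the empty set taken
to be `0`. -/
noncomputable def V {n m : ℕ} (p : Fin n → ℝ) (h : Fin n → Fin m) : ℝ :=
  ∑ j : Fin m, (Finset.univ.filter (fun i => h i = j)).fold max 0 p

/-!
Moving a file of frequency at most `p i₀` into the column of `i₀` does not raise the maximum of that
column, while every other column only loses files. So no column maximum increases.
-/

open scoped NNReal

section General

variable {ι κ M : Type*}

/-- The vulnerability of a scheme `h` padding files `ι` to columns `κ`: the sum over the columns of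
the largest frequency in that column. Frequencies live in an order with a least element, which is
the value of an empty column; for `ℝ≥0` it is `0`. -/
def vulnerability [Fintype ι] [Fintype κ] [DecidableEq κ] [AddCommMonoid M] [SemilatticeSup M]
    [OrderBot M] (p : ι → M) (h : ι → κ) : M :=
  ∑ j, (Finset.univ.filter (h · = j)).sup p

/-- The scheme obtained from `f` by moving into column `j` every file `i` whose set `A i` of
admissible columns contains `j`. -/
def mergeInto (A : ι → Set κ) (j : κ) [∀ i, Decidable (j ∈ A i)] (f : ι → κ) : ι → κ :=
  fun i => if j ∈ A i then j else f i

theorem mergeInto_mem_pi {A : ι → Set κ} {f : ι → κ} (hf : f ∈ Set.univ.pi A) (j : κ)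
    [∀ i, Decidable (j ∈ A i)] : mergeInto A j f ∈ Set.univ.pi A := by
  intro i hi
  by_cases hj : j ∈ A i
  · simpa only [mergeInto, if_pos hj] using hj
  · simpa only [mergeInto, if_neg hj] using hf i hi

variable [Fintype ι] [Fintype κ] [DecidableEq κ] [AddCommMonoid M] [SemilatticeSup M] [OrderBot M]
  [IsOrderedAddMonoid M] {p : ι → M}

theorem vulnerability_le_of_forall_exists_le {f g : ι → κ}
    (hfg : ∀ i, ∃ i', f i' = g i ∧ p i ≤ p i') : vulnerability p g ≤ vulnerability p f := by
  refine Finset.sum_le_sum fun j _ => Finset.sup_le fun i hi => ?_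
  obtain ⟨i', hi', hp⟩ := hfg i
  have hi'_mem : i' ∈ Finset.univ.filter (f · = j) :=
    Finset.mem_filter.mpr ⟨Finset.mem_univ i', hi'.trans (Finset.mem_filter.mp hi).2⟩
  exact Finset.le_sup_of_le hi'_mem hp

theorem vulnerability_mergeInto_le {A : ι → Set κ} {f : ι → κ} {i₀ : ι}
    [∀ i, Decidable (f i₀ ∈ A i)] (hi₀ : ∀ i, f i₀ ∈ A i → p i ≤ p i₀) :
    vulnerability p (mergeInto A (f i₀) f) ≤ vulnerability p f := by
  refine vulnerability_le_of_forall_exists_le fun i => ?_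
  by_cases hi : f i₀ ∈ A i
  · exact ⟨i₀, (if_pos hi).symm, hi₀ i hi⟩
  · exact ⟨i, (if_neg hi).symm, le_rfl⟩

theorem observation1_general {A : ι → Set κ} {f : ι → κ} (hf : f ∈ Set.univ.pi A) {i₀ : ι}
    [∀ i, Decidable (f i₀ ∈ A i)] (hi₀ : ∀ i, f i₀ ∈ A i → p i ≤ p i₀) :
    mergeInto A (f i₀) f ∈ Set.univ.pi A ∧
      vulnerability p (mergeInto A (f i₀) f) ≤ vulnerability p f ∧
      (IsMinOn (vulnerability p) (Set.univ.pi A) f →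
        IsMinOn (vulnerability p) (Set.univ.pi A) (mergeInto A (f i₀) f)) :=
  have hle := vulnerability_mergeInto_le hi₀
  ⟨mergeInto_mem_pi hf (f i₀), hle, fun hopt _ hg => hle.trans (hopt hg)⟩

end General

theorem V_coe_eq_coe_vulnerability {n m : ℕ} (p : Fin n → ℝ≥0) (h : Fin n → Fin m) :
    V (fun i => (p i : ℝ)) h = vulnerability p h := by
  rw [V, vulnerability, NNReal.coe_sum]
  exact Finset.sum_congr rfl fun j _ => Finset.fold_hom (b := (0 : ℝ≥0)) (f := p) NNReal.coe_max

/-- Observation 1: if `i₀` has maximal frequency and `j = f i₀`, moving every file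
that may be padded to column `j` into column `j` yields a feasible scheme whose
vulnerability is no larger; in particular optimality is preserved. -/
theorem observation1 (n m : ℕ) (hn : 0 < n) (hm : 0 < m)
    (p : Fin n → ℝ) (hp : ∀ i, 0 ≤ p i)
    (l r : Fin n → Fin m) (hlr : ∀ i, l i ≤ r i)
    (f : Fin n → Fin m) (hf : ∀ i, l i ≤ f i ∧ f i ≤ r i)
    (i₀ : Fin n) (hi₀ : ∀ i, p i ≤ p i₀)
    (fstar : Fin n → Fin m)
    (hfstar : ∀ i, fstar i = if l i ≤ f i₀ ∧ f i₀ ≤ r i then f i₀ else f i) :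
    (∀ i, l i ≤ fstar i ∧ fstar i ≤ r i) ∧
      V p fstar ≤ V p f ∧
      ((∀ g : Fin n → Fin m, (∀ i, l i ≤ g i ∧ g i ≤ r i) → V p f ≤ V p g) →
        ∀ g : Fin n → Fin m, (∀ i, l i ≤ g i ∧ g i ≤ r i) → V p fstar ≤ V p g) := by
  lift p to Fin n → ℝ≥0 using hp
  obtain rfl : fstar = mergeInto (fun i => Set.Icc (l i) (r i)) (f i₀) f := funext hfstar
  simpa only [V_coe_eq_coe_vulnerability, NNReal.coe_le_coe, isMinOn_iff, Set.mem_univ_pi,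
      Set.mem_Icc] using
    observation1_general (p := p) (A := fun i => Set.Icc (l i) (r i)) (fun i _ => hf i)
      fun i _ => hi₀ i
end

section
/- (Observation 2.) Let n, m ≥ 1, let p : Fin n → ℝ with p i ≥ 0 and ∑ i, p i = 1, and let l, r : Fin n → Fin m with l i ≤ r i for all i. Let f : Fin n → Fin m be feasible (l i ≤ f i ≤ r i), define the output distribution q j = ∑_{i with f i = j} p i, and let j₀ : Fin m satisfy q j ≤ q j₀ for all j. Let i₀ : Fin n be an index with l i₀ ≤ j₀ ≤ r i₀, and let f* be f updated so that f* i₀ = j₀ (and f* i = f i for i ≠ i₀), with output distribution q*. Then f* is feasible and ∑_{j : Fin m} negMulLog (q* j) ≤ ∑_{j : Fin m} negMulLog (q j); that is, moving any file into the column with the highest output probability yields a padding scheme whose Shannon leakage (which for deterministic schemes equals the Shannon entropy of the output) is no larger. -/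
/-!
Moving a file of weight `w` replaces the masses `a` of the target column and `b` of the source
column by `a + w` and `b - w`. The sum is unchanged, and if `b ≤ a + w` the old masses lie between
the new ones, so the pair has been spread apart; the sum of a concave function, such as `negMulLog`,
over a pair can only decrease when the pair is spread apart.
-/

theorem map_add_map_le_of_concaveOn_of_mem_segment {𝕜 E β : Type*}
    [Semiring 𝕜] [PartialOrder 𝕜] [AddCancelCommMonoid E] [Module 𝕜 E]
    [AddCommMonoid β] [PartialOrder β] [IsOrderedAddMonoid β] [Module 𝕜 β]
    {s : Set E} {φ : E → β} (hφ : ConcaveOn 𝕜 s φ) {x y a b : E} (hx : x ∈ s) (hy : y ∈ s)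
    (ha : a ∈ segment 𝕜 x y) (hab : a + b = x + y) :
    φ x + φ y ≤ φ a + φ b := by
  obtain ⟨t, u, ht, hu, htu, rfl⟩ := ha
  have hb : u • x + t • y = b := by
    rw [← add_right_inj (t • x + u • y), hab]
    calc t • x + u • y + (u • x + t • y) = (t + u) • x + (t + u) • y := by
          simp only [add_smul]
          abel
      _ = x + y := by rw [htu, one_smul, one_smul]
  calc φ x + φ y = (t + u) • φ x + (t + u) • φ y := by rw [htu, one_smul, one_smul]
    _ = (t • φ x + u • φ y) + (u • φ x + t • φ y) := by
      simp only [add_smul]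
      abel
    _ ≤ φ (t • x + u • y) + φ (u • x + t • y) :=
      add_le_add (hφ.2 hx hy ht hu htu) (hφ.2 hx hy hu ht (by rwa [add_comm]))
    _ = φ (t • x + u • y) + φ b := by rw [hb]

section Transfer

variable {𝕜 β : Type*} [Field 𝕜] [LinearOrder 𝕜] [IsStrictOrderedRing 𝕜]
  [AddCommMonoid β] [PartialOrder β] [IsOrderedAddMonoid β] [Module 𝕜 β]
  {s : Set 𝕜} {φ : 𝕜 → β}

theorem map_add_add_map_sub_le_of_concaveOn (hφ : ConcaveOn 𝕜 s φ) {a b d : 𝕜} (hd : 0 ≤ d)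
    (hba : b ≤ a + d) (ha : a + d ∈ s) (hb : b - d ∈ s) :
    φ (a + d) + φ (b - d) ≤ φ a + φ b := by
  have ha_mem : a ∈ segment 𝕜 (a + d) (b - d) := by
    rw [segment_symm]
    exact Icc_subset_segment ⟨by linarith, by linarith⟩
  exact map_add_map_le_of_concaveOn_of_mem_segment hφ ha hb ha_mem (by ring)

theorem sum_map_add_single_sub_single_le_of_concaveOn {κ : Type*} [Fintype κ] [DecidableEq κ]
    (hφ : ConcaveOn 𝕜 s φ) {q : κ → 𝕜} {j k : κ} {d : 𝕜} (hd : 0 ≤ d)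
    (hkj : q k ≤ q j + d) (hj : q j + d ∈ s) (hk : q k - d ∈ s) :
    ∑ i, φ ((q + Pi.single j d - Pi.single k d : κ → 𝕜) i) ≤ ∑ i, φ (q i) := by
  obtain rfl | hjk := eq_or_ne j k
  · rw [add_sub_cancel_right]
  rw [← Finset.sum_add_sum_compl {j, k}, ← Finset.sum_add_sum_compl {j, k} fun i ↦ φ (q i),
    Finset.sum_pair hjk, Finset.sum_pair hjk]
  refine add_le_add ?_ (Finset.sum_congr rfl fun i hi ↦ ?_).le
  · simpa [hjk, hjk.symm] using map_add_add_map_sub_le_of_concaveOn hφ hd hkj hj hk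
  · obtain ⟨hij, hik⟩ : i ≠ j ∧ i ≠ k := by simpa using hi
    simp [hij, hik]

end Transfer

section OutputDist

variable {ι κ M : Type*} [Fintype ι] [DecidableEq κ]

/-- The output distribution of the deterministic padding scheme `f` when file `i` has weight `p i`:
the pushforward of `p` along `f`. The weights need not sum to `1`. -/
def outputDist [AddCommMonoid M] (p : ι → M) (f : ι → κ) (j : κ) : M :=
  ∑ i with f i = j, p i

theorem outputDist_eq_sum_single [AddCommMonoid M] (p : ι → M) (f : ι → κ) :
    outputDist p f = ∑ i, Pi.single (f i) (p i) := by
  ext j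
  simp only [outputDist, Finset.sum_filter, Finset.sum_apply, Pi.single_apply, eq_comm]

theorem outputDist_update [DecidableEq ι] [AddCommGroup M] (p : ι → M) (f : ι → κ) (i₀ : ι)
    (j₀ : κ) :
    outputDist p (Function.update f i₀ j₀) =
      outputDist p f + Pi.single j₀ (p i₀) - Pi.single (f i₀) (p i₀) := by
  have hrest : ∑ i ∈ {i₀}ᶜ, (Pi.single (Function.update f i₀ j₀ i) (p i) : κ → M) =
      ∑ i ∈ {i₀}ᶜ, Pi.single (f i) (p i) :=
    Finset.sum_congr rfl fun i hi ↦ by rw [Function.update_of_ne (by simpa using hi)]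
  rw [outputDist_eq_sum_single, outputDist_eq_sum_single, Fintype.sum_eq_add_sum_compl i₀,
    Fintype.sum_eq_add_sum_compl i₀ fun i ↦ (Pi.single (f i) (p i) : κ → M), hrest,
    Function.update_self]
  abel

variable [AddCommMonoid M] [PartialOrder M] [IsOrderedAddMonoid M] {p : ι → M}

theorem outputDist_nonneg (hp : ∀ i, 0 ≤ p i) (f : ι → κ) (j : κ) : 0 ≤ outputDist p f j :=
  Finset.sum_nonneg fun i _ ↦ hp i

theorem le_outputDist_apply (hp : ∀ i, 0 ≤ p i) (f : ι → κ) (i : ι) :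
    p i ≤ outputDist p f (f i) :=
  Finset.single_le_sum (fun i _ ↦ hp i) (by simp)

end OutputDist

theorem observation2_general {ι κ 𝕜 β : Type*} [Fintype ι] [DecidableEq ι] [Fintype κ]
    [DecidableEq κ] [Field 𝕜] [LinearOrder 𝕜] [IsStrictOrderedRing 𝕜]
    [AddCommMonoid β] [PartialOrder β] [IsOrderedAddMonoid β] [Module 𝕜 β]
    {φ : 𝕜 → β} (hφ : ConcaveOn 𝕜 (Set.Ici 0) φ) {p : ι → 𝕜} (hp : ∀ i, 0 ≤ p i)
    {C : ι → Set κ} {f : ι → κ} (hf : ∀ i, f i ∈ C i) {i₀ : ι} {j₀ : κ} (hi₀ : j₀ ∈ C i₀)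
    (hj₀ : outputDist p f (f i₀) ≤ outputDist p f j₀ + p i₀) :
    (∀ i, Function.update f i₀ j₀ i ∈ C i) ∧
      ∑ j, φ (outputDist p (Function.update f i₀ j₀) j) ≤ ∑ j, φ (outputDist p f j) := by
  constructor
  · exact (Function.forall_update_iff f fun i j ↦ j ∈ C i).2 ⟨hi₀, fun i _ ↦ hf i⟩
  · rw [outputDist_update]
    exact sum_map_add_single_sub_single_le_of_concaveOn hφ (hp i₀) hj₀
      (add_nonneg (outputDist_nonneg hp f j₀) (hp i₀)) (sub_nonneg.2 (le_outputDist_apply hp f i₀))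

/-- Observation 2: moving any file into the column with the highest output probability
yields a feasible padding scheme whose output Shannon entropy (hence Shannon leakage)
is no larger. -/
theorem observation2 (n m : ℕ) (hn : 0 < n) (hm : 0 < m)
    (p : Fin n → ℝ) (hp : ∀ i, 0 ≤ p i) (hsum : ∑ i, p i = 1)
    (l r : Fin n → Fin m) (hlr : ∀ i, l i ≤ r i)
    (f : Fin n → Fin m) (hf : ∀ i, l i ≤ f i ∧ f i ≤ r i)
    (q : Fin m → ℝ) (hq : ∀ j, q j = ∑ i ∈ Finset.univ.filter (fun i => f i = j), p i)
    (j₀ : Fin m) (hj₀ : ∀ j, q j ≤ q j₀)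
    (i₀ : Fin n) (hi₀ : l i₀ ≤ j₀ ∧ j₀ ≤ r i₀)
    (fstar : Fin n → Fin m) (hfstar : ∀ i, fstar i = if i = i₀ then j₀ else f i)
    (qstar : Fin m → ℝ)
    (hqstar : ∀ j, qstar j = ∑ i ∈ Finset.univ.filter (fun i => fstar i = j), p i) :
    (∀ i, l i ≤ fstar i ∧ fstar i ≤ r i) ∧
      ∑ j : Fin m, Real.negMulLog (qstar j) ≤ ∑ j : Fin m, Real.negMulLog (q j) := by
  obtain rfl : fstar = Function.update f i₀ j₀ :=
    funext fun i ↦ (hfstar i).trans (Function.update_apply f i₀ j₀ i).symm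
  obtain rfl : q = outputDist p f := funext hq
  obtain rfl : qstar = outputDist p (Function.update f i₀ j₀) := funext hqstar
  exact observation2_general (C := fun i ↦ Set.Icc (l i) (r i)) Real.concaveOn_negMulLog hp hf hi₀
    ((hj₀ (f i₀)).trans (le_add_of_nonneg_right (hp i₀)))
end

section
/- (Structure of the optimal last column, from the Observation underlying PrpRe.) Let n, m ≥ 1, let b : Fin n → ℝ with b i ≥ 0, and let l, r : Fin n → Fin m with l i ≤ r i for all i. Let F be the set of feasible joint matrices: I : Fin n → Fin m → ℝ with I i j ≥ 0, ∑_j I i j = b i for every i, and I i j = 0 whenever j < l i or r i < j. Write last for the largest element of Fin m, let T = {i | l i = last}, assume T is nonempty, and let bmax = max over i ∈ T of b i. Then there exists a matrix I ∈ F that minimizes V(I) = ∑_j max_i I i j over F and that moreover satisfies: I i last = b i for every i ∈ T, and I i last = min (b i) bmax for every i ∉ T with r i = last. (Files of maximal size put all their mass in the last column; every other file that can be padded to the maximal size puts mass min(b i, bmax) there, preserving the column maximum bmax.) -/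
/-- A feasible joint distribution matrix: nonnegative entries, row sums equal to the
budgets `b`, support within the padding constraints `[l i, r i]`. -/
def FeasibleJoint {n m : ℕ} (b : Fin n → ℝ) (l r : Fin n → Fin m)
    (I : Fin n → Fin m → ℝ) : Prop :=
  (∀ i j, 0 ≤ I i j) ∧ (∀ i, ∑ j, I i j = b i) ∧
    (∀ i j, (j < l i ∨ r i < j) → I i j = 0)

/-- The vulnerability `∑_j max_i I i j` of a joint distribution matrix. -/
noncomputable def Vjoint {n m : ℕ} (hn : 0 < n) (I : Fin n → Fin m → ℝ) : ℝ :=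
  ∑ j : Fin m,
    Finset.univ.sup' (Finset.univ_nonempty_iff.mpr ⟨⟨0, hn⟩⟩) (fun i => I i j)

/-!
The vulnerability of a matrix `J` is the least sum `∑ j, u j` over vectors of column caps `u` with
`J i ≤ u` for every row `i`. Files of maximal size have all their mass in the last column, so
`bmax ≤ u last`. Lower this cap to `bmax` and give the difference to the column just before it. A
row with more than `min (b i) bmax` in the last column sends the excess to that column, where the
larger cap absorbs it; a row with less raises its last entry and scales down all the others. The sum
of the caps has not changed, so applying this to a minimizer, which exists by compactness, gives a
minimizer with the prescribed last column.
-/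

section Transfer

variable {ι G : Type*} [DecidableEq ι]

/-- The vector obtained from `f` by moving the amount `x` from entry `q` to entry `p`. It is applied
to the rows of a joint matrix and to the vectors of column caps alike; for `p = q` it is `f`. -/
def transfer [AddCommGroup G] (p q : ι) (x : G) (f : ι → G) : ι → G :=
  f + Pi.single p x - Pi.single q x

theorem sum_transfer [Fintype ι] [AddCommGroup G] (p q : ι) (x : G) (f : ι → G) :
    ∑ j, transfer p q x f j = ∑ j, f j := by
  simp [transfer, Finset.sum_add_distrib]

theorem transfer_apply_source [AddCommGroup G] {p q : ι} (hpq : p ≠ q) (x : G) (f : ι → G) :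
    transfer p q x f q = f q - x := by
  simp [transfer, hpq]

theorem transfer_apply_of_ne [AddCommGroup G] {p q j : ι} (hp : j ≠ p) (hq : j ≠ q) (x : G)
    (f : ι → G) : transfer p q x f j = f j := by
  simp [transfer, hp, hq]

variable [AddCommGroup G] [Preorder G] [IsOrderedAddMonoid G]

theorem sub_le_transfer_apply_source (p q : ι) {x : G} (hx : 0 ≤ x) (f : ι → G) :
    f q - x ≤ transfer p q x f q := by
  have hp : (0 : ι → G) ≤ Pi.single p x := Pi.single_nonneg.mpr hx
  simpa [transfer] using hp q

theorem transfer_apply_mono {p q j : ι} (hj : j ≠ q) {x y : G} {f u : ι → G} (hxy : x ≤ y)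
    (hfu : f j ≤ u j) : transfer p q x f j ≤ transfer p q y u j := by
  have hp : (Pi.single p x : ι → G) j ≤ (Pi.single p y : ι → G) j := Pi.single_mono p hxy j
  simpa [transfer, hj] using add_le_add hfu hp

theorem le_transfer_apply_of_ne {p q j : ι} (hj : j ≠ q) {x : G} (hx : 0 ≤ x) (f : ι → G) :
    f j ≤ transfer p q x f j := by
  simpa [transfer] using transfer_apply_mono (p := p) hj hx (le_refl (f j))

theorem transfer_nonneg {p q : ι} {x : G} {f : ι → G} (hf : 0 ≤ f) (hx : 0 ≤ x) (hxq : x ≤ f q) :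
    0 ≤ transfer p q x f := fun j => by
  obtain rfl | hj := eq_or_ne j q
  · exact (sub_nonneg.mpr hxq).trans (sub_le_transfer_apply_source p j hx f)
  · exact (hf j).trans (le_transfer_apply_of_ne hj hx f)

theorem le_transfer_of_apply_le (p : ι) {q : ι} {c : G} {f u : ι → G} (hfu : f ≤ u) (hfc : f q ≤ c)
    (hcu : c ≤ u q) : f ≤ transfer p q (u q - c) u := fun j => by
  have hD : 0 ≤ u q - c := sub_nonneg.mpr hcu
  obtain rfl | hj := eq_or_ne j q
  · calc f j ≤ u j - (u j - c) := hfc.trans_eq (sub_sub_cancel _ _).symm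
      _ ≤ transfer p j (u j - c) u j := sub_le_transfer_apply_source p j hD u
  · exact (hfu j).trans (le_transfer_apply_of_ne hj hD u)

end Transfer

theorem exists_nonneg_sum_eq_apply_eq {ι K : Type*} [Fintype ι] [Field K] [LinearOrder K]
    [IsStrictOrderedRing K] {f : ι → K} (hf : 0 ≤ f) {q : ι} {c : K} (hqc : f q ≤ c)
    (hc : c ≤ ∑ j, f j) :
    ∃ g : ι → K, 0 ≤ g ∧ ∑ j, g j = ∑ j, f j ∧ g q = c ∧ ∀ j ≠ q, g j ≤ f j := by
  classical
  obtain rfl | hlt := hqc.eq_or_lt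
  · exact ⟨f, hf, rfl, rfl, fun _ _ => le_rfl⟩
  have hrest : ∑ j ∈ Finset.univ.erase q, f j = ∑ j, f j - f q :=
    Finset.sum_erase_eq_sub (Finset.mem_univ q)
  have hpos : 0 < ∑ j, f j - f q := sub_pos.mpr (hlt.trans_le hc)
  set a : K := (∑ j, f j - c) / (∑ j, f j - f q) with ha
  have ha0 : 0 ≤ a := div_nonneg (sub_nonneg.mpr hc) hpos.le
  have ha1 : a ≤ 1 := (div_le_one hpos).mpr (sub_le_sub_left hqc _)
  refine ⟨Function.update (a • f) q c, fun j => ?_, ?_, by simp, fun j hj => ?_⟩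
  · obtain rfl | hj := eq_or_ne j q
    · simpa using (hf j).trans hqc
    · simpa [hj] using mul_nonneg ha0 (hf j)
  · calc ∑ j, Function.update (a • f) q c j
        = c + a * ∑ j ∈ Finset.univ.erase q, f j := by
          simp only [Finset.sum_update_of_mem (Finset.mem_univ q),
            Finset.sdiff_singleton_eq_erase, Pi.smul_apply, smul_eq_mul, Finset.mul_sum]
      _ = ∑ j, f j := by
          rw [hrest, ha, div_mul_cancel₀ _ hpos.ne', add_sub_cancel]
  · simpa [hj] using mul_le_of_le_one_left (hf j) ha1

/-- One row of a feasible joint matrix: a nonnegative vector with sum `β` that is supported on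
`[lo, hi]`. It isolates what the feasibility of a matrix demands of a single file, over an arbitrary
ordered set of columns. -/
structure FeasibleRow {κ : Type*} [Fintype κ] [Preorder κ] (β : ℝ) (lo hi : κ) (f : κ → ℝ) :
    Prop where
  nonneg : ∀ j, 0 ≤ f j
  sum_eq : ∑ j, f j = β
  eq_zero : ∀ j, j < lo ∨ hi < j → f j = 0

namespace FeasibleRow

section Preorder

variable {κ : Type*} [Fintype κ] [Preorder κ] {β : ℝ} {lo hi : κ} {f : κ → ℝ}

theorem apply_le (hf : FeasibleRow β lo hi f) (j : κ) : f j ≤ β :=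
  hf.sum_eq ▸ Finset.single_le_sum (fun k _ => hf.nonneg k) (Finset.mem_univ j)

theorem single [DecidableEq κ] (hβ : 0 ≤ β) (h : lo ≤ hi) :
    FeasibleRow β lo hi (Pi.single lo β) where
  nonneg := show (0 : κ → ℝ) ≤ Pi.single lo β from Pi.single_nonneg.mpr hβ
  sum_eq := by simp
  eq_zero j hj := by
    have hne : j ≠ lo := fun hjlo => hj.elim hjlo.not_lt (hjlo ▸ h).not_gt
    exact Pi.single_eq_of_ne hne _

theorem isCompact_setOf (β : ℝ) (lo hi : κ) : IsCompact {f | FeasibleRow β lo hi f} := by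
  have hsubset : {f | FeasibleRow β lo hi f} ⊆ Set.Icc 0 fun _ => β :=
    fun f hf => ⟨hf.nonneg, hf.apply_le⟩
  have hclosed : IsClosed {f | FeasibleRow β lo hi f} := by
    have heq : {f | FeasibleRow β lo hi f} =
        Set.Ici 0 ∩ {f | ∑ j, f j = β} ∩ {f | ∀ j, j < lo ∨ hi < j → f j = 0} :=
      Set.ext fun f => ⟨fun hf => ⟨⟨hf.nonneg, hf.sum_eq⟩, hf.eq_zero⟩,
        fun hf => ⟨hf.1.1, hf.1.2, hf.2⟩⟩
    rw [heq]
    refine (isClosed_Ici.inter (isClosed_eq (by fun_prop) continuous_const)).inter ?_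
    simp only [Set.ofPred_forall]
    exact isClosed_iInter fun j => isClosed_iInter fun _ =>
      isClosed_eq (continuous_apply j) continuous_const
  exact isCompact_Icc.of_isClosed_subset hclosed hsubset

end Preorder

section PartialOrder

variable {κ : Type*} [Fintype κ] [PartialOrder κ] {β c : ℝ} {lo hi p q : κ} {f u : κ → ℝ}

theorem apply_eq_of_isTop (hf : FeasibleRow β q hi f) (hq : IsTop q) : f q = β := by
  rw [← hf.sum_eq]
  exact (Fintype.sum_eq_single q fun j hj => hf.eq_zero j (.inl ((hq j).lt_of_ne hj))).symm

variable [DecidableEq κ]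

theorem exists_apply_eq_le_transfer (hf : FeasibleRow β lo q f) (hq : IsTop q) (hlo : lo ≤ p)
    (hpq : p < q) (hc0 : 0 ≤ c) (hcβ : c ≤ β) :
    ∃ g, FeasibleRow β lo q g ∧ g q = c ∧
      ∀ j ≠ q, g j ≤ transfer p q (f q - min (f q) c) f j := by
  set f' := transfer p q (f q - min (f q) c) f
  have hf'q : f' q = min (f q) c :=
    (transfer_apply_source hpq.ne _ f).trans (sub_sub_cancel _ _)
  have hf'0 : 0 ≤ f' := transfer_nonneg hf.nonneg (sub_nonneg.mpr (min_le_left _ _))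
    (sub_le_self _ (le_min (hf.nonneg q) hc0))
  have hf'β : ∑ j, f' j = β := by rw [sum_transfer, hf.sum_eq]
  obtain ⟨g, hg0, hgsum, hgq, hgle⟩ := exists_nonneg_sum_eq_apply_eq hf'0
    (hf'q.trans_le (min_le_right _ _)) (hcβ.trans_eq hf'β.symm)
  refine ⟨g, ⟨hg0, hgsum.trans hf'β, ?_⟩, hgq, hgle⟩
  rintro j (hj | hj)
  · have hjp : j < p := hj.trans_le hlo
    have hjq : j ≠ q := (hjp.trans hpq).ne
    refine le_antisymm ?_ (hg0 j)
    calc g j ≤ f' j := hgle j hjq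
      _ = f j := transfer_apply_of_ne hjp.ne hjq _ _
      _ = 0 := hf.eq_zero j (.inl hj)
  · exact absurd (hq j) hj.not_ge

/-- If `q` is the only column then `Order.pred q = q`, so the caps stay as they are; in that case
`lo = q` and the row stays as it is too. -/
theorem exists_apply_eq_min [PredOrder κ] (hf : FeasibleRow β lo hi f) (hq : IsTop q)
    (hc0 : 0 ≤ c) (hlo : lo = q → β ≤ c) (hfu : f ≤ u) (hcu : c ≤ u q) :
    ∃ g, FeasibleRow β lo hi g ∧ (hi = q → g q = min β c) ∧
      g ≤ transfer (Order.pred q) q (u q - c) u := by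
  obtain rfl | hloq := eq_or_ne lo q
  · have hfq : f lo = β := hf.apply_eq_of_isTop hq
    exact ⟨f, hf, fun _ => hfq.trans (min_eq_left (hlo rfl)).symm,
      le_transfer_of_apply_le _ hfu (hfq.trans_le (hlo rfl)) hcu⟩
  obtain rfl | hhi := eq_or_ne hi q
  · have hlt : lo < hi := (hq lo).lt_of_ne hloq
    have hβ : 0 ≤ β := (hf.nonneg hi).trans (hf.apply_le hi)
    obtain ⟨g, hg, hgq, hgle⟩ := hf.exists_apply_eq_le_transfer hq (Order.le_pred_of_lt hlt)
      (Order.pred_lt_of_not_isMin hlt.not_isMin) (le_min hβ hc0) (min_le_left β c)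
    have hexcess : f hi - min (f hi) (min β c) ≤ u hi - c := by
      rw [← min_assoc, min_eq_left (hf.apply_le hi), ← max_sub_sub_left]
      exact max_le (by simpa using hcu) (sub_le_sub_right (hfu hi) c)
    refine ⟨g, hg, fun _ => hgq, fun j => ?_⟩
    obtain rfl | hj := eq_or_ne j hi
    · calc g j ≤ c := hgq.trans_le (min_le_right β c)
        _ ≤ transfer (Order.pred j) j (u j - c) u j := by
          simpa using sub_le_transfer_apply_source (Order.pred j) j (sub_nonneg.mpr hcu) u
    · exact (hgle j hj).trans (transfer_apply_mono hj hexcess (hfu j))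
  · have hfq : f q = 0 := hf.eq_zero q (.inr ((hq hi).lt_of_ne hhi))
    exact ⟨f, hf, fun h => absurd h hhi, le_transfer_of_apply_le _ hfu (hfq.trans_le hc0) hcu⟩

end PartialOrder

end FeasibleRow

section Joint

variable {n m : ℕ} {b : Fin n → ℝ} {l r : Fin n → Fin m} {I : Fin n → Fin m → ℝ}

theorem feasibleJoint_iff_forall_feasibleRow :
    FeasibleJoint b l r I ↔ ∀ i, FeasibleRow (b i) (l i) (r i) (I i) :=
  ⟨fun h i => ⟨h.1 i, h.2.1 i, h.2.2 i⟩,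
    fun h => ⟨fun i => (h i).nonneg, fun i => (h i).sum_eq, fun i => (h i).eq_zero⟩⟩

theorem Vjoint_le_iff (hn : 0 < n) {x : ℝ} :
    Vjoint hn I ≤ x ↔ ∃ u : Fin m → ℝ, (∀ i, I i ≤ u) ∧ ∑ j, u j ≤ x := by
  refine ⟨fun h => ⟨_, fun i j => ?_, h⟩, fun ⟨u, hIu, hux⟩ => ?_⟩
  · exact Finset.le_sup' (fun i => I i j) (Finset.mem_univ i)
  · exact (Finset.sum_le_sum fun j _ => Finset.sup'_le _ _ fun i _ => hIu i j).trans hux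

theorem continuous_Vjoint (hn : 0 < n) : Continuous (Vjoint hn (m := m)) :=
  continuous_finsetSum _ fun j _ =>
    Continuous.finset_sup'_apply _ fun i _ => continuous_apply_apply i j

theorem exists_feasibleJoint_forall_Vjoint_le (hn : 0 < n) (hb : ∀ i, 0 ≤ b i)
    (hlr : ∀ i, l i ≤ r i) :
    ∃ I, FeasibleJoint b l r I ∧ ∀ J, FeasibleJoint b l r J → Vjoint hn I ≤ Vjoint hn J := by
  have hcompact : IsCompact {I | FeasibleJoint b l r I} := by
    simpa [Set.pi, feasibleJoint_iff_forall_feasibleRow] using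
      isCompact_univ_pi fun i => FeasibleRow.isCompact_setOf (b i) (l i) (r i)
  have hnonempty : {I | FeasibleJoint b l r I}.Nonempty :=
    ⟨_, feasibleJoint_iff_forall_feasibleRow.mpr fun i => .single (hb i) (hlr i)⟩
  exact hcompact.exists_isMinOn hnonempty (continuous_Vjoint hn).continuousOn

theorem FeasibleJoint.exists_Vjoint_le_apply_eq_min {J : Fin n → Fin m → ℝ} {q : Fin m} {c : ℝ}
    (hJ : FeasibleJoint b l r J) (hn : 0 < n) (hq : IsTop q) (hc0 : 0 ≤ c)
    (hlo : ∀ i, l i = q → b i ≤ c) (hcJ : ∃ i, c ≤ J i q) :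
    ∃ I, FeasibleJoint b l r I ∧ Vjoint hn I ≤ Vjoint hn J ∧
      ∀ i, r i = q → I i q = min (b i) c := by
  obtain ⟨u, hJu, hu⟩ := (Vjoint_le_iff hn).mp (le_refl (Vjoint hn J))
  obtain ⟨t, ht⟩ := hcJ
  choose I hI hIq hIu using fun i =>
    (feasibleJoint_iff_forall_feasibleRow.mp hJ i).exists_apply_eq_min hq hc0 (hlo i) (hJu i)
      (ht.trans (hJu t q))
  refine ⟨I, feasibleJoint_iff_forall_feasibleRow.mpr hI, ?_, hIq⟩
  exact (Vjoint_le_iff hn).mpr ⟨_, hIu, (sum_transfer _ _ _ _).trans_le hu⟩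

end Joint

/-- Structure of the optimal last column (Observation underlying `PrpRe`): there is a
vulnerability-minimizing feasible joint matrix in which each file of maximal size puts
all its budget in the last column, and every other file that can be padded to the
maximal size puts mass `min (b i) bmax` there. -/
theorem prpRe_last_column_structure (n m : ℕ) (hn : 0 < n) (hm : 0 < m)
    (b : Fin n → ℝ) (hb : ∀ i, 0 ≤ b i)
    (l r : Fin n → Fin m) (hlr : ∀ i, l i ≤ r i)
    (last : Fin m) (hlast : ∀ j : Fin m, j ≤ last)
    (hT : ∃ i, l i = last)
    (bmax : ℝ) (hbmax : IsGreatest {x : ℝ | ∃ i, l i = last ∧ b i = x} bmax) :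
    ∃ I : Fin n → Fin m → ℝ,
      FeasibleJoint b l r I ∧
      (∀ J : Fin n → Fin m → ℝ, FeasibleJoint b l r J → Vjoint hn I ≤ Vjoint hn J) ∧
      (∀ i, l i = last → I i last = b i) ∧
      (∀ i, l i ≠ last → r i = last → I i last = min (b i) bmax) := by
  obtain ⟨⟨t, ht, rfl⟩, hub⟩ := hbmax
  have hT_le : ∀ i, l i = last → b i ≤ b t := fun i hi => hub ⟨i, hi, rfl⟩
  obtain ⟨J, hJ, hJmin⟩ := exists_feasibleJoint_forall_Vjoint_le hn hb hlr
  have hfull : ∀ I, FeasibleJoint b l r I → ∀ i, l i = last → I i last = b i := fun I hI i hi =>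
    (hi ▸ feasibleJoint_iff_forall_feasibleRow.mp hI i).apply_eq_of_isTop hlast
  obtain ⟨I, hI, hIJ, hIlast⟩ := hJ.exists_Vjoint_le_apply_eq_min hn hlast (hb t) hT_le
    ⟨t, (hfull J hJ t ht).ge⟩
  exact ⟨I, hI, fun K hK => hIJ.trans (hJmin K hK), hfull I hI, fun i _ => hIlast i⟩
end

section
/- (Correctness of a single Shannon-improving/bandwidth-improving move preserving minimal Rényi leakage.) Let n, m ≥ 1, let p : Fin n → ℝ with p i ≥ 0, and let l, r : Fin n → Fin m with l i ≤ r i. Let f : Fin n → Fin m be feasible (l i ≤ f i ≤ r i), let i₀ : Fin n and j : Fin m satisfy l i₀ ≤ j ≤ r i₀, and suppose there exists a with f a = j and p i₀ ≤ p a. Let f* be f updated so that f* i₀ = j (and f* i = f i for i ≠ i₀). Then f* is feasible and V(f*) ≤ V(f), where V(h) = ∑_{j' : Fin m} max{p i | h i = j'} (maximum of the empty set taken to be 0). In particular, if f has minimal vulnerability among feasible schemes, then f* does as well, so moving a file into any column whose current maximum frequency is at least its own preserves minimal Rényi min-entropy leakage. -/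
/-!
If every file can be charged to a file of the old scheme that occupied the same column with at least
the same frequency, then no column maximum grows, and so neither does the vulnerability. After
moving `i₀` into column `j`, charge `i₀` to the dominating file already in `j` and every other file
to itself.
-/

theorem fold_max_le_fold_max_of_forall_exists_le {α β γ : Type*} [LinearOrder γ]
    {s : Finset α} {t : Finset β} {u : α → γ} {v : β → γ} {b c : γ} (hbc : b ≤ c)
    (huv : ∀ x ∈ s, ∃ y ∈ t, u x ≤ v y) : s.fold max b u ≤ t.fold max c v :=
  Finset.fold_max_le _ |>.2
    ⟨Finset.le_fold_max _ |>.2 (.inl hbc), fun x hx => Finset.le_fold_max _ |>.2 (.inr (huv x hx))⟩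

theorem V_le_V_of_forall_exists_le {n n' m : ℕ} {p : Fin n → ℝ} {q : Fin n' → ℝ}
    {f : Fin n → Fin m} {g : Fin n' → Fin m} (hfg : ∀ i, ∃ a, g a = f i ∧ p i ≤ q a) :
    V p f ≤ V q g := by
  refine Finset.sum_le_sum fun k _ => fold_max_le_fold_max_of_forall_exists_le le_rfl fun i hi => ?_
  obtain ⟨a, hga, hia⟩ := hfg i
  exact ⟨a, by simpa [hga] using hi, hia⟩

theorem V_update_le {n m : ℕ} {p : Fin n → ℝ} {f : Fin n → Fin m} {i₀ : Fin n} {j : Fin m}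
    (ha : ∃ a, f a = j ∧ p i₀ ≤ p a) : V p (Function.update f i₀ j) ≤ V p f :=
  V_le_V_of_forall_exists_le <|
    (Function.forall_update_iff f fun i k => ∃ a, f a = k ∧ p i ≤ p a).2
      ⟨ha, fun i _ => ⟨i, rfl, le_rfl⟩⟩

theorem move_preserves_min_vuln_general {n m : ℕ} (p : Fin n → ℝ) (C : Fin n → Set (Fin m))
    (f : Fin n → Fin m) (hf : ∀ i, f i ∈ C i) (i₀ : Fin n) (j : Fin m) (hj : j ∈ C i₀)
    (ha : ∃ a, f a = j ∧ p i₀ ≤ p a) :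
    (∀ i, Function.update f i₀ j i ∈ C i) ∧
      V p (Function.update f i₀ j) ≤ V p f ∧
      ((∀ g : Fin n → Fin m, (∀ i, g i ∈ C i) → V p f ≤ V p g) →
        ∀ g : Fin n → Fin m, (∀ i, g i ∈ C i) → V p (Function.update f i₀ j) ≤ V p g) :=
  ⟨(Function.forall_update_iff f fun i k => k ∈ C i).2 ⟨hj, fun i _ => hf i⟩,
    V_update_le ha, fun hmin g hg => (V_update_le ha).trans (hmin g hg)⟩

/-- A single move preserving minimal Rényi leakage: moving file `i₀` into a feasible
column `j` already containing some file `a` with `p i₀ ≤ p a` yields a feasible scheme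
with no larger vulnerability; in particular it preserves minimal vulnerability. -/
theorem move_preserves_min_vuln (n m : ℕ) (hn : 0 < n) (hm : 0 < m)
    (p : Fin n → ℝ) (hp : ∀ i, 0 ≤ p i)
    (l r : Fin n → Fin m) (hlr : ∀ i, l i ≤ r i)
    (f : Fin n → Fin m) (hf : ∀ i, l i ≤ f i ∧ f i ≤ r i)
    (i₀ : Fin n) (j : Fin m) (hij : l i₀ ≤ j ∧ j ≤ r i₀)
    (ha : ∃ a, f a = j ∧ p i₀ ≤ p a)
    (fstar : Fin n → Fin m) (hfstar : ∀ i, fstar i = if i = i₀ then j else f i) :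
    (∀ i, l i ≤ fstar i ∧ fstar i ≤ r i) ∧
      V p fstar ≤ V p f ∧
      ((∀ g : Fin n → Fin m, (∀ i, l i ≤ g i ∧ g i ≤ r i) → V p f ≤ V p g) →
        ∀ g : Fin n → Fin m, (∀ i, l i ≤ g i ∧ g i ≤ r i) → V p fstar ≤ V p g) := by
  obtain rfl : fstar = Function.update f i₀ j :=
    funext fun i => (hfstar i).trans (Function.update_apply f i₀ j i).symm
  exact move_preserves_min_vuln_general p (fun i => Set.Icc (l i) (r i)) f hf i₀ j hij ha
end
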